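/- There exists a non proper storage operator T for Church integers such that ⊢_AF2 T : ∀x{N^g[x] → ¬¬N[x]}, i.e. a storage operator of this type whose result terms τₙ are not closed λ-terms. -/

import Mathlib

/- Pure untyped λ-calculus with de Bruijn indices. -/

inductive Lam : Type
  | var : ℕ → Lam
  | app : Lam → Lam → Lam
  | abs : Lam → Lam
  deriving DecidableEq

namespace Lam

/-- Renaming of free variables. -/
def rename (ρ : ℕ → ℕ) : Lam → Lam
  | var i => var (ρ i)
  | app u v => app (u.rename ρ) (v.rename ρ)
  | abs u => abs (u.rename (fun i => match i with | 0 => 0 | j+1 => ρ j + 1))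

/-- Lifting of a simultaneous substitution under a binder. -/
def liftSub (σ : ℕ → Lam) : ℕ → Lam
  | 0 => var 0
  | i+1 => (σ i).rename (· + 1)

/-- Simultaneous (capture-avoiding) substitution of the free variables. -/
def subst (σ : ℕ → Lam) : Lam → Lam
  | var i => σ i
  | app u v => app (u.subst σ) (v.subst σ)
  | abs u => abs (u.subst (liftSub σ))

/-- `u.subst0 v` is `u[v/x]` for the first variable. -/
def subst0 (u v : Lam) : Lam :=
  u.subst (fun i => match i with | 0 => v | j+1 => var j)

/-- One step of β-reduction (anywhere in the term). -/
inductive Beta : Lam → Lam → Prop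
  | beta (u v : Lam) : Beta (app (abs u) v) (u.subst0 v)
  | appL {u u'} (v) : Beta u u' → Beta (app u v) (app u' v)
  | appR (u) {v v'} : Beta v v' → Beta (app u v) (app u v')
  | abs {u u'} : Beta u u' → Beta (abs u) (abs u')

/-- β-equivalence `≃β`. -/
def BetaEq : Lam → Lam → Prop := Relation.EqvGen Beta

/-- A term is normal if it has no β-redex. -/
def Normal (t : Lam) : Prop := ∀ u, ¬ Beta t u

def IsAbs : Lam → Prop
  | abs _ => True
  | _ => False

/-- One step of head reduction: reduction of the head redex. -/
inductive HeadStep : Lam → Lam → Prop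
  | beta (u v) : HeadStep (app (abs u) v) (u.subst0 v)
  | appL {u u'} (v) : ¬ u.IsAbs → HeadStep u u' → HeadStep (app u v) (app u' v)
  | abs {u u'} : HeadStep u u' → HeadStep (abs u) (abs u')

/-- `HeadRedN n u v` : `u` head-reduces to `v` in exactly `n` steps (`u ≻ v` with `n(u,v) = n`). -/
inductive HeadRedN : ℕ → Lam → Lam → Prop
  | refl (u) : HeadRedN 0 u u
  | step {n u v w} : HeadStep u v → HeadRedN n v w → HeadRedN (n+1) u w

/-- `u ≻ v` : `v` is obtained from `u` by some head reductions. -/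
def HeadRed (u v : Lam) : Prop := ∃ n, HeadRedN n u v

/-- Head normal form. -/
def HeadNF (t : Lam) : Prop := ∀ u, ¬ HeadStep t u

def ClosedUnder : ℕ → Lam → Prop
  | k, var i => i < k
  | k, app u v => ClosedUnder k u ∧ ClosedUnder k v
  | k, abs u => ClosedUnder (k+1) u

/-- Closed λ-term. -/
def Closed (t : Lam) : Prop := ClosedUnder 0 t

/-- `(f)ⁿx` : `iterApp f n x = (f)(f)…(f)x`. -/
def iterApp (f : Lam) : ℕ → Lam → Lam
  | 0, x => x
  | n+1, x => app f (iterApp f n x)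

/-- The Church integer `n̲ = λxλf(f)ⁿx`. -/
def church (n : ℕ) : Lam := abs (abs (iterApp (var 0) n (var 1)))

/-- `(t)w₁…wₖ`. -/
def appList (t : Lam) (ws : List Lam) : Lam := ws.foldl app t

/-- `T` is a storage operator for the closed normal term `t` :
there is `τ ≃β t` such that for every `θ ≃β t` there is a substitution `σ`
(not touching the fresh variable `f`, represented by the de Bruijn index `0`)
with `(T)θf ≻ (f)σ(τ)`. -/
def IsStorageFor (T t : Lam) : Prop :=
  Closed T ∧ ∃ τ, BetaEq τ t ∧ ∀ θ, BetaEq θ t →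
    ∃ σ : ℕ → Lam, σ 0 = var 0 ∧
      HeadRed (app (app T θ) (var 0)) (app (var 0) (τ.subst σ))

end Lam

/- Second order predicate logic : the types of the AF2 type system. -/

/-- A first order language: function symbols with arities, and predicate symbols. -/
structure Sig where
  Fn : Type
  arFn : Fn → ℕ
  Pr : Type

/-- First order terms over `S` (de Bruijn indices for first order variables). -/
inductive FOTerm (S : Sig) : Type
  | var : ℕ → FOTerm S
  | fn : (f : S.Fn) → (Fin (S.arFn f) → FOTerm S) → FOTerm S

namespace FOTerm

variable {S : Sig}

def rename (ρ : ℕ → ℕ) : FOTerm S → FOTerm S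
  | var i => var (ρ i)
  | fn f ts => fn f (fun i => (ts i).rename ρ)

def liftSub (σ : ℕ → FOTerm S) : ℕ → FOTerm S
  | 0 => var 0
  | i+1 => (σ i).rename (· + 1)

/-- Simultaneous substitution on first order terms. -/
def subst (σ : ℕ → FOTerm S) : FOTerm S → FOTerm S
  | var i => σ i
  | fn f ts => fn f (fun i => (ts i).subst σ)

end FOTerm

/-- Formulas of second order predicate logic over `S` : `⊥`, atomic formulas
`P(t₁,…,tₙ)` (predicate symbol) and `X(t₁,…,tₙ)` (predicate variable, de Bruijn),
implication, first order and second order universal quantification. -/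
inductive Form (S : Sig) : Type
  | bot : Form S
  | pr : S.Pr → List (FOTerm S) → Form S
  | pvar : ℕ → List (FOTerm S) → Form S
  | arr : Form S → Form S → Form S
  | fall : Form S → Form S
  | pall : Form S → Form S

namespace Form

variable {S : Sig}

/-- `¬A = A → ⊥`. -/
def neg (A : Form S) : Form S := arr A bot

/-- Substitution of first order terms for the first order variables of a formula. -/
def substFO (σ : ℕ → FOTerm S) : Form S → Form S
  | bot => bot
  | pr P ts => pr P (ts.map (FOTerm.subst σ))
  | pvar X ts => pvar X (ts.map (FOTerm.subst σ))
  | arr A B => arr (A.substFO σ) (B.substFO σ)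
  | fall A => fall (A.substFO (FOTerm.liftSub σ))
  | pall A => pall (A.substFO σ)

/-- `A[u/x]` for the first first-order variable. -/
def substFO0 (A : Form S) (u : FOTerm S) : Form S :=
  A.substFO (fun i => match i with | 0 => u | j+1 => FOTerm.var j)

/-- Lifting of the free first order variables (used for the rule (4)). -/
def shiftFO (A : Form S) : Form S := A.substFO (fun i => FOTerm.var (i+1))

/-- Renaming of the free predicate variables. -/
def rename2 (ρ : ℕ → ℕ) : Form S → Form S
  | bot => bot
  | pr P ts => pr P ts
  | pvar X ts => pvar (ρ X) ts
  | arr A B => arr (A.rename2 ρ) (B.rename2 ρ)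
  | fall A => fall (A.rename2 ρ)
  | pall A => pall (A.rename2 (fun i => match i with | 0 => 0 | j+1 => ρ j + 1))

/-- `inst2 G d e A` : substitution `A[G/X]` of the formula `G` (whose first order
variables `0,…,k-1` are the parameters of the predicate variable `X`) for the
predicate variable `X` of de Bruijn index `e`, where `d` first order binders have
been crossed. Each atomic subformula `X(t₁,…,tₖ)` is replaced by `G[t₁/x₁,…,tₖ/xₖ]`. -/
def inst2 (G : Form S) : ℕ → ℕ → Form S → Form S
  | _, _, bot => bot
  | _, _, pr P ts => pr P ts
  | d, e, pvar X ts =>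
      if X = e then
        (G.rename2 (· + e)).substFO (fun i =>
          if h : i < ts.length then ts.get ⟨i, h⟩ else FOTerm.var (i - ts.length + d))
      else pvar (if e < X then X - 1 else X) ts
  | d, e, arr A B => arr (inst2 G d e A) (inst2 G d e B)
  | d, e, fall A => fall (inst2 G (d+1) e A)
  | d, e, pall A => pall (inst2 G d (e+1) A)

/-- `A[G/X]` for the first predicate variable. -/
def inst2_0 (A G : Form S) : Form S := inst2 G 0 0 A

end Form

/-- Axioms of the equational theory: substitution instances of the equations of `E`. -/
def EqAx {S : Sig} (E : Set (FOTerm S × FOTerm S)) (u v : FOTerm S) : Prop :=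
  ∃ p ∈ E, ∃ σ : ℕ → FOTerm S, u = p.1.subst σ ∧ v = p.2.subst σ

/-- `u ≈ v` : the equivalence relation generated by the substitution instances
of the equations of `E`. -/
def EqE {S : Sig} (E : Set (FOTerm S × FOTerm S)) : FOTerm S → FOTerm S → Prop :=
  Relation.EqvGen (EqAx E)

/-- The AF2 type system: `AF2 S E Γ t A` means `Γ ⊢_{AF2} t : A`
with respect to the set of equations `E` (de Bruijn presentation: the rules
(4) and (6) of ∀-introduction lift the context, which implements the side
condition that the quantified variable does not occur free in `Γ`). -/
inductive AF2 (S : Sig) (E : Set (FOTerm S × FOTerm S)) :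
    List (Form S) → Lam → Form S → Prop
  | var {Γ : List (Form S)} {i : ℕ} {A : Form S} :
      Γ[i]? = some A → AF2 S E Γ (.var i) A
  | absI {Γ : List (Form S)} {A B : Form S} {t : Lam} :
      AF2 S E (A :: Γ) t B → AF2 S E Γ (.abs t) (.arr A B)
  | appE {Γ : List (Form S)} {A B : Form S} {u v : Lam} :
      AF2 S E Γ u (.arr A B) → AF2 S E Γ v A → AF2 S E Γ (.app u v) B
  | fallI {Γ : List (Form S)} {t : Lam} {A : Form S} :
      AF2 S E (Γ.map Form.shiftFO) t A → AF2 S E Γ t (.fall A)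
  | fallE {Γ : List (Form S)} {t : Lam} {A : Form S} (u : FOTerm S) :
      AF2 S E Γ t (.fall A) → AF2 S E Γ t (A.substFO0 u)
  | pallI {Γ : List (Form S)} {t : Lam} {A : Form S} :
      AF2 S E (Γ.map (Form.rename2 (· + 1))) t A → AF2 S E Γ t (.pall A)
  | pallE {Γ : List (Form S)} {t : Lam} {A : Form S} (G : Form S) :
      AF2 S E Γ t (.pall A) → AF2 S E Γ t (A.inst2_0 G)
  | eqE {Γ : List (Form S)} {t : Lam} {A : Form S} {u v : FOTerm S} :
      AF2 S E Γ t (A.substFO0 u) → EqE E u v → AF2 S E Γ t (A.substFO0 v)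

/- The language of arithmetic: a constant 0 and a unary function symbol s. -/

inductive NatFn : Type
  | zero : NatFn
  | succ : NatFn

/-- The signature with a constant symbol `0` and a unary function symbol `s`. -/
def NatSig : Sig where
  Fn := NatFn
  arFn := fun f => match f with | .zero => 0 | .succ => 1
  Pr := Empty

/-- The first order term `0`. -/
def zeroT : FOTerm NatSig := .fn NatFn.zero (fun i => i.elim0)

/-- The first order term `s(u)`. -/
def succT (u : FOTerm NatSig) : FOTerm NatSig := .fn NatFn.succ (fun _ => u)

/-- The first order term `sⁿ(0)`. -/
def numT : ℕ → FOTerm NatSig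
  | 0 => zeroT
  | n+1 => succT (numT n)

/-- The type of integers `N[u] = ∀X{X(0), ∀y(X(y) → X(sy)) → X(u)}`. -/
def NForm (u : FOTerm NatSig) : Form NatSig :=
  .pall (.arr (.pvar 0 [zeroT])
    (.arr (.fall (.arr (.pvar 0 [FOTerm.var 0]) (.pvar 0 [succT (FOTerm.var 0)])))
      (.pvar 0 [u])))

/-- A set of equations is adequate with the type of integers iff
`s(a) ≉ 0` and `s(a) ≈ s(b)` implies `a ≈ b`. -/
def Adequate (E : Set (FOTerm NatSig × FOTerm NatSig)) : Prop :=
  (∀ a, ¬ EqE E (succT a) zeroT) ∧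
  (∀ a b, EqE E (succT a) (succT b) → EqE E a b)

/-- The Gödel translation `F^g`, obtained by putting `¬` in front of
each atomic subformula of `F`. -/
def Form.godel {S : Sig} : Form S → Form S
  | .bot => .neg .bot
  | .pr P ts => .neg (.pr P ts)
  | .pvar X ts => .neg (.pvar X ts)
  | .arr A B => .arr A.godel B.godel
  | .fall A => .fall A.godel
  | .pall A => .pall A.godel

/-- The type `∀x{N^g[x] → ¬¬N[x]}` of storage operators. -/
def storType : Form NatSig :=
  .fall (.arr (NForm (FOTerm.var 0)).godel (.neg (.neg (NForm (FOTerm.var 0)))))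

namespace Lam

/-- `T` is a proper storage operator for `t` : the result `τ` can be chosen closed. -/
def IsProperStorageFor (T t : Lam) : Prop :=
  Closed T ∧ ∃ τ, Closed τ ∧ BetaEq τ t ∧ ∀ θ, BetaEq θ t →
    ∃ σ : ℕ → Lam, σ 0 = var 0 ∧
      HeadRed (app (app T θ) (var 0)) (app (var 0) (τ.subst σ))

end Lam


/-! ### Substitution lemmas -/

namespace SO

open Lam

/-- Lifting of a renaming under a binder. -/
def upr (ρ : ℕ → ℕ) : ℕ → ℕ := fun i => match i with | 0 => 0 | j+1 => ρ j + 1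

/-- Extension of a substitution (or valuation). -/
def cons {α : Type*} (a : α) (s : ℕ → α) : ℕ → α := fun i => match i with | 0 => a | j+1 => s j

theorem rename_abs (ρ : ℕ → ℕ) (u : Lam) : (Lam.abs u).rename ρ = .abs (u.rename (upr ρ)) := rfl

theorem subst0_eq (u v : Lam) : u.subst0 v = u.subst (cons v Lam.var) := rfl

theorem rename_rename (t : Lam) : ∀ ρ ρ' : ℕ → ℕ,
    (t.rename ρ).rename ρ' = t.rename (fun i => ρ' (ρ i)) := by
  induction t with
  | var i => intros; rfl
  | app u v hu hv => intros; simp [Lam.rename, hu, hv]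
  | abs u hu =>
    intro ρ ρ'
    simp only [rename_abs, hu]
    congr 2; funext i; cases i <;> rfl

theorem subst_rename (t : Lam) : ∀ (ρ : ℕ → ℕ) (σ : ℕ → Lam),
    (t.rename ρ).subst σ = t.subst (fun i => σ (ρ i)) := by
  induction t with
  | var i => intros; rfl
  | app u v hu hv => intros; simp [Lam.rename, Lam.subst, hu, hv]
  | abs u hu =>
    intro ρ σ
    simp only [rename_abs, Lam.subst, hu]
    congr 2; funext i; cases i <;> rfl

theorem rename_subst (t : Lam) : ∀ (σ : ℕ → Lam) (ρ : ℕ → ℕ),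
    (t.subst σ).rename ρ = t.subst (fun i => (σ i).rename ρ) := by
  induction t with
  | var i => intros; rfl
  | app u v hu hv => intros; simp [Lam.rename, Lam.subst, hu, hv]
  | abs u hu =>
    intro σ ρ
    simp only [rename_abs, Lam.subst, hu]
    congr 2; funext i
    cases i with
    | zero => rfl
    | succ j => simp only [Lam.liftSub, rename_rename]; rfl

theorem subst_subst (t : Lam) : ∀ (σ τ : ℕ → Lam),
    (t.subst σ).subst τ = t.subst (fun i => (σ i).subst τ) := by
  induction t with
  | var i => intros; rfl
  | app u v hu hv => intros; simp [Lam.subst, hu, hv]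
  | abs u hu =>
    intro σ τ
    simp only [Lam.subst, hu]
    congr 2; funext i
    cases i with
    | zero => rfl
    | succ j => simp only [Lam.liftSub, rename_subst, subst_rename]

theorem subst_closedUnder (t : Lam) : ∀ (k : ℕ) (σ : ℕ → Lam), ClosedUnder k t →
    (∀ i < k, σ i = .var i) → t.subst σ = t := by
  induction t with
  | var i => intro k σ h hs; exact hs i h
  | app u v hu hv => intro k σ h hs; simp [Lam.subst, hu k σ h.1 hs, hv k σ h.2 hs]
  | abs u hu =>
    intro k σ h hs
    simp only [Lam.subst]
    rw [hu (k+1) _ h]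
    intro i hi
    cases i with
    | zero => rfl
    | succ j => simp only [Lam.liftSub, hs j (by omega)]; rfl

theorem subst_closed {t : Lam} (h : Closed t) (σ : ℕ → Lam) : t.subst σ = t :=
  subst_closedUnder t 0 σ h (by intro i hi; omega)

theorem subst_var (t : Lam) : t.subst Lam.var = t := by
  induction t with
  | var i => rfl
  | app u v hu hv => simp [Lam.subst, hu, hv]
  | abs u hu =>
    have : Lam.liftSub Lam.var = Lam.var := by funext i; cases i <;> rfl
    simp [Lam.subst, this, hu]

theorem rename_eq_subst (t : Lam) (ρ : ℕ → ℕ) : t.rename ρ = t.subst (fun i => .var (ρ i)) := by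
  have h := subst_rename t ρ Lam.var
  rwa [subst_var] at h

theorem rename_closed {t : Lam} (h : Closed t) (ρ : ℕ → ℕ) : t.rename ρ = t := by
  rw [rename_eq_subst, subst_closed h]

theorem shift_subst0 (t v : Lam) : (t.rename (· + 1)).subst (cons v Lam.var) = t := by
  rw [subst_rename]; exact subst_var t

theorem shift_lift (t : Lam) (σ : ℕ → Lam) :
    (t.rename (· + 1)).subst (liftSub σ) = (t.subst σ).rename (· + 1) := by
  rw [subst_rename, rename_subst]; rfl

/-! ### The graph model -/

/-- Elements of the graph model. -/
inductive D : Type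
  | atom : ℕ → D
  | arr : (k : ℕ) → (Fin k → D) → D → D

/-- Interpretation of terms. -/
def den : Lam → (ℕ → Set D) → Set D
  | .var i, ρ => ρ i
  | .app u v, ρ => {b | ∃ k l, D.arr k l b ∈ den u ρ ∧ ∀ i, l i ∈ den v ρ}
  | .abs u, ρ => {d | ∃ k l b, d = D.arr k l b ∧ b ∈ den u (cons (Set.range l) ρ)}

theorem cons_mono {α : Type*} {s s' : Set α} {ρ ρ' : ℕ → Set α} (h : s ⊆ s')
    (h' : ∀ i, ρ i ⊆ ρ' i) : ∀ i, cons s ρ i ⊆ cons s' ρ' i := by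
  intro i; cases i with
  | zero => exact h
  | succ j => exact h' j

theorem den_mono (t : Lam) : ∀ ρ ρ' : ℕ → Set D, (∀ i, ρ i ⊆ ρ' i) → den t ρ ⊆ den t ρ' := by
  induction t with
  | var i => intro ρ ρ' h; exact h i
  | app u v hu hv =>
    rintro ρ ρ' h b ⟨k, l, h1, h2⟩
    exact ⟨k, l, hu _ _ h h1, fun i => hv _ _ h (h2 i)⟩
  | abs u hu =>
    rintro ρ ρ' h d ⟨k, l, b, rfl, h1⟩
    exact ⟨k, l, b, rfl, hu _ _ (cons_mono (subset_refl _) h) h1⟩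

theorem den_cont (t : Lam) : ∀ (ρ : ℕ → Set D) (b : D), b ∈ den t ρ →
    ∃ ρ₀ : ℕ → Set D, (∀ i, ρ₀ i ⊆ ρ i) ∧ (∀ i, (ρ₀ i).Finite) ∧ b ∈ den t ρ₀ := by
  induction t with
  | var i =>
    intro ρ b h
    refine ⟨fun j => {x | j = i ∧ x = b}, ?_, ?_, ?_⟩
    · rintro j x ⟨rfl, rfl⟩; exact h
    · intro j; exact (Set.finite_singleton b).subset (fun x hx => hx.2)
    · exact ⟨rfl, rfl⟩
  | app u v hu hv =>
    rintro ρ b ⟨k, l, h1, h2⟩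
    obtain ⟨ρ₀, a1, a2, a3⟩ := hu ρ _ h1
    choose r b1 b2 b3 using fun i => hv ρ _ (h2 i)
    refine ⟨fun j => ρ₀ j ∪ ⋃ i, r i j, ?_, ?_, k, l, ?_, ?_⟩
    · intro j; exact Set.union_subset (a1 j) (Set.iUnion_subset fun i => b1 i j)
    · intro j; exact (a2 j).union (Set.finite_iUnion fun i => b2 i j)
    · exact den_mono u _ _ (fun j => Set.subset_union_left) a3
    · intro i
      refine den_mono v _ _ (fun j => ?_) (b3 i)
      exact (Set.subset_iUnion (fun i => r i j) i).trans Set.subset_union_right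
  | abs u hu =>
    rintro ρ d ⟨k, l, b, rfl, h1⟩
    obtain ⟨ρ₀, a1, a2, a3⟩ := hu _ _ h1
    refine ⟨fun i => ρ₀ (i+1), fun i => a1 (i+1), fun i => a2 (i+1), k, l, b, rfl, ?_⟩
    refine den_mono u _ _ (fun i => ?_) a3
    cases i with
    | zero => exact a1 0
    | succ j => exact subset_refl _

theorem den_rename (t : Lam) : ∀ (f : ℕ → ℕ) (ρ : ℕ → Set D),
    den (t.rename f) ρ = den t (fun i => ρ (f i)) := by
  induction t with
  | var i => intros; rfl
  | app u v hu hv => intros; simp [Lam.rename, den, hu, hv]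
  | abs u hu =>
    intro f ρ
    simp only [rename_abs, den, hu]
    have : ∀ s : Set D, (fun i => cons s ρ (upr f i)) = cons s (fun i => ρ (f i)) := by
      intro s; funext i; cases i <;> rfl
    simp only [this]

theorem den_subst (t : Lam) : ∀ (σ : ℕ → Lam) (ρ : ℕ → Set D),
    den (t.subst σ) ρ = den t (fun i => den (σ i) ρ) := by
  induction t with
  | var i => intros; rfl
  | app u v hu hv => intros; simp [Lam.subst, den, hu, hv]
  | abs u hu =>
    intro σ ρ
    simp only [Lam.subst, den, hu]
    have : ∀ s : Set D, (fun i => den (liftSub σ i) (cons s ρ)) =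
        cons s (fun i => den (σ i) ρ) := by
      intro s; funext i
      cases i with
      | zero => rfl
      | succ j => simp only [Lam.liftSub, den_rename]; rfl
    simp only [this]

theorem den_beta (u v : Lam) (ρ : ℕ → Set D) :
    den (.app (.abs u) v) ρ = den (u.subst0 v) ρ := by
  rw [subst0_eq, den_subst]
  have e : (fun i => den (cons v Lam.var i) ρ) = cons (den v ρ) ρ := by
    funext i; cases i <;> rfl
  rw [e]
  ext b
  constructor
  · rintro ⟨k, l, ⟨k', l', b', heq, h1⟩, h2⟩
    cases heq
    refine den_mono u _ _ (cons_mono ?_ (fun i => subset_refl _)) h1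
    rintro x ⟨i, rfl⟩; exact h2 i
  · intro h
    obtain ⟨ρ₀, a1, a2, a3⟩ := den_cont u _ _ h
    obtain ⟨k, l, -, hl⟩ := (a2 0).fin_param
    refine ⟨k, l, ⟨k, l, b, rfl, ?_⟩, ?_⟩
    · refine den_mono u _ _ (fun i => ?_) a3
      cases i with
      | zero => exact hl.symm.subset
      | succ j => exact a1 (j+1)
    · intro i
      exact a1 0 (hl ▸ Set.mem_range_self i)

theorem den_step {t t' : Lam} (h : Beta t t') : ∀ ρ, den t ρ = den t' ρ := by
  induction h with
  | beta u v => exact den_beta u v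
  | appL v _ ih => intro ρ; simp only [den, ih]
  | appR u _ ih => intro ρ; simp only [den, ih]
  | abs _ ih => intro ρ; simp only [den, ih]

theorem den_betaEq {t t' : Lam} (h : BetaEq t t') : ∀ ρ, den t ρ = den t' ρ := by
  induction h with
  | rel x y h => exact den_step h
  | refl x => intro; rfl
  | symm x y _ ih => intro ρ; exact (ih ρ).symm
  | trans x y z _ _ ih1 ih2 => intro ρ; exact (ih1 ρ).trans (ih2 ρ)

/-! ### Weak head reduction -/

/-- Weak head reduction step. -/
inductive WH : Lam → Lam → Prop
  | beta (u v) : WH (.app (.abs u) v) (u.subst0 v)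
  | app {u u'} (v) : WH u u' → WH (.app u v) (.app u' v)

theorem WH.headStep {u v : Lam} (h : WH u v) : ¬ u.IsAbs ∧ HeadStep u v := by
  induction h with
  | beta u v => exact ⟨id, .beta u v⟩
  | app v _ ih => exact ⟨id, .appL v ih.1 ih.2⟩

/-- Reflexive transitive closure of weak head reduction. -/
def WHs : Lam → Lam → Prop := Relation.ReflTransGen WH

theorem WHs.app {u u' : Lam} (h : WHs u u') (v : Lam) : WHs (.app u v) (.app u' v) := by
  induction h with
  | refl => exact .refl
  | tail _ h ih => exact ih.tail (.app v h)

theorem WHs.headRed {u v : Lam} (h : WHs u v) : HeadRed u v := by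
  induction h using Relation.ReflTransGen.head_induction_on with
  | refl => exact ⟨0, .refl _⟩
  | head h _ ih => obtain ⟨n, hn⟩ := ih; exact ⟨n+1, .step h.headStep.2 hn⟩

theorem headStep_det {t u : Lam} (h : HeadStep t u) : ∀ {v}, HeadStep t v → u = v := by
  induction h with
  | beta u v =>
    intro w hw
    cases hw with
    | beta => rfl
    | appL _ hn _ => exact absurd trivial hn
  | appL v hn _ ih =>
    intro w hw
    cases hw with
    | beta => exact absurd trivial hn
    | appL _ _ h' => rw [ih h']
  | abs _ ih =>
    intro w hw
    cases hw with
    | abs h' => rw [ih h']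

theorem headRed_det {n : ℕ} {t u : Lam} (h : HeadRedN n t u) (hu : HeadNF u) :
    ∀ {m v}, HeadRedN m t v → HeadNF v → u = v := by
  induction h with
  | refl u =>
    intro m v h' _
    cases h' with
    | refl => rfl
    | step h _ => exact absurd h (hu _)
  | step h _ ih =>
    intro m v h' hv
    cases h' with
    | refl => exact absurd h (hv _)
    | step h2 h3 =>
      rw [headStep_det h2 h] at h3
      exact ih hu h3 hv

theorem headNF_var_app (i : ℕ) (t : Lam) : HeadNF (.app (.var i) t) := by
  intro u h
  cases h with
  | appL _ _ h => cases h

/-! ### The terms -/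

/-- `0 = λxλf x`. -/
def Z : Lam := .abs (.abs (.var 1))

/-- `s = λmλxλf (f)((m)x f)`. -/
def Sc : Lam := .abs (.abs (.abs (.app (.var 0) (.app (.app (.var 2) (.var 1)) (.var 0)))))

/-- `(s)ⁿ0`. -/
def SZ : ℕ → Lam
  | 0 => Z
  | n+1 => .app Sc (SZ n)

/-- `δ = λf (f)0`. -/
def dl : Lam := .abs (.app (.var 0) Z)

/-- `G = λxλy (x)λz (y)(s)z`. -/
def G : Lam := .abs (.abs (.app (.var 1) (.abs (.app (.var 1) (.app Sc (.var 0))))))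

/-- The operator `T = λnλf (n) δ G λz (f)((λd z) n)`. -/
def T : Lam := .abs (.abs (.app (.app (.app (.var 1) dl) G)
  (.abs (.app (.var 1) (.app (.abs (.var 1)) (.var 2))))))

theorem SZ_closed (n : ℕ) : Closed (SZ n) := by
  induction n with
  | zero => simp [SZ, Z, Closed, ClosedUnder]
  | succ n ih => exact ⟨by simp [Sc, ClosedUnder], ih⟩

theorem T_closed : Closed T := by simp [T, dl, G, Z, Sc, Closed, ClosedUnder]

/-! ### Realizability -/

/-- Realizability of elements of the model. -/
def Real : D → Lam → Prop
  | .atom i, t => ∀ F, WHs (.app t F) (.app F (SZ i))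
  | .arr _ l b, t => ∀ v, (∀ i, Real (l i) v) → Real b (.app t v)

theorem real_exp (d : D) : ∀ {t t' : Lam}, WH t t' → Real d t' → Real d t := by
  induction d with
  | atom i => intro t t' h h' F; exact (h' F).head (.app F h)
  | arr k l b _ ih => intro t t' h h' v hv; exact ih (.app v h) (h' v hv)

theorem adequacy (t : Lam) : ∀ (ρ : ℕ → Set D) (σ : ℕ → Lam) (d : D),
    (∀ i, ∀ a ∈ ρ i, Real a (σ i)) → d ∈ den t ρ → Real d (t.subst σ) := by
  induction t with
  | var i => intro ρ σ d h hd; exact h i d hd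
  | app u v hu hv =>
    rintro ρ σ d h ⟨k, l, h1, h2⟩
    exact hu ρ σ _ h h1 _ (fun i => hv ρ σ _ h (h2 i))
  | abs u hu =>
    rintro ρ σ d h ⟨k, l, b, rfl, h1⟩ v hv
    refine real_exp b (.beta _ v) ?_
    have e : (u.subst (liftSub σ)).subst0 v = u.subst (cons v σ) := by
      rw [subst0_eq, subst_subst]
      congr 1; funext i
      cases i with
      | zero => rfl
      | succ j => exact shift_subst0 _ _
    rw [e]
    refine hu _ _ _ ?_ h1
    intro i
    cases i with
    | zero => rintro a ⟨j, rfl⟩; exact hv j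
    | succ j => exact h j

theorem real_dl : Real (.atom 0) dl := by
  intro F
  exact .single (.beta _ _)

theorem real_G (i : ℕ) : Real (.arr 1 (fun _ => .atom i) (.atom (i+1))) G := by
  intro t ht F
  have ht : ∀ F, WHs (.app t F) (.app F (SZ i)) := ht 0
  have h1 : WHs (.app (.app G t) F) (.app t (.abs (.app (F.rename (· + 1)) (.app Sc (.var 0))))) := by
    refine (Relation.ReflTransGen.single (.app F (.beta _ t))).tail ?_
    have := WH.beta (.app (t.rename (· + 1)) (.abs (.app (.var 1) (.app Sc (.var 0))))) F
    have e : (Lam.app (t.rename (· + 1)) (.abs (.app (.var 1) (.app Sc (.var 0))))).subst0 F =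
      .app t (.abs (.app (F.rename (· + 1)) (.app Sc (.var 0)))) := by
      rw [subst0_eq]
      simp only [Lam.subst, shift_subst0]
      rfl
    rw [e] at this
    exact this
  refine (h1.trans (ht _)).tail ?_
  have := WH.beta (.app (F.rename (· + 1)) (.app Sc (.var 0))) (SZ i)
  have e : (Lam.app (F.rename (· + 1)) (.app Sc (.var 0))).subst0 (SZ i) =
      .app F (SZ (i+1)) := by
    rw [subst0_eq]
    simp only [Lam.subst, shift_subst0]
    rfl
  rw [e] at this
  exact this

/-- The element of the model characterizing `n`. -/
def dn (n : ℕ) : D := .arr 1 (fun _ => .atom 0)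
  (.arr n (fun i => .arr 1 (fun _ => .atom i.val) (.atom (i.val+1))) (.atom n))

theorem church_den (n : ℕ) (ρ : ℕ → Set D) : dn n ∈ den (church n) ρ := by
  refine ⟨_, _, _, rfl, _, _, _, rfl, ?_⟩
  have : ∀ m ≤ n, D.atom m ∈ den (iterApp (.var 0) m (.var 1))
      (cons (Set.range (fun i : Fin n => D.arr 1 (fun _ => .atom i.val) (.atom (i.val+1))))
        (cons (Set.range (fun _ : Fin 1 => D.atom 0)) ρ)) := by
    intro m
    induction m with
    | zero => intro _; exact ⟨0, rfl⟩
    | succ m ih =>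
      intro hm
      exact ⟨1, fun _ => .atom m, ⟨⟨m, hm⟩, rfl⟩, fun _ => ih (by omega)⟩
  exact this n le_rfl

theorem theta_red {n : ℕ} {θ : Lam} (h : BetaEq θ (church n)) (F : Lam) :
    WHs (.app (.app (.app θ dl) G) F) (.app F (SZ n)) := by
  have h1 : dn n ∈ den θ (fun _ => ∅) := by
    rw [den_betaEq h]; exact church_den n _
  have h2 := adequacy θ (fun _ => ∅) Lam.var _ (fun i a ha => absurd ha (Set.notMem_empty a)) h1
  rw [subst_var] at h2
  exact h2 dl (fun _ => real_dl) G (fun i => real_G i.val) F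

theorem T_red {n : ℕ} {θ : Lam} (h : BetaEq θ (church n)) :
    WHs (.app (.app T θ) (.var 0)) (.app (.var 0) (.app (.abs (SZ n)) θ)) := by
  have s1 : WH (.app (.app T θ) (.var 0)) (.app (.abs (.app (.app (.app (θ.rename (· + 1)) dl) G)
      (.abs (.app (.var 1) (.app (.abs (.var 1)) ((θ.rename (· + 1)).rename (· + 1))))))) (.var 0)) :=
    .app _ (.beta _ θ)
  have s2 := WH.beta (.app (.app (.app (θ.rename (· + 1)) dl) G)
      (.abs (.app (.var 1) (.app (.abs (.var 1)) ((θ.rename (· + 1)).rename (· + 1)))))) (.var 0)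
  have e2 : (Lam.app (.app (.app (θ.rename (· + 1)) dl) G)
      (.abs (.app (.var 1) (.app (.abs (.var 1)) ((θ.rename (· + 1)).rename (· + 1)))))).subst0 (.var 0)
      = .app (.app (.app θ dl) G) (.abs (.app (.var 1) (.app (.abs (.var 1)) (θ.rename (· + 1))))) := by
    rw [subst0_eq]
    simp only [Lam.subst, shift_lift, shift_subst0]
    rfl
  rw [e2] at s2
  have s3 := WH.beta (.app (.var 1) (.app (.abs (.var 1)) (θ.rename (· + 1)))) (SZ n)
  have e3 : (Lam.app (.var 1) (.app (.abs (.var 1)) (θ.rename (· + 1)))).subst0 (SZ n) =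
      .app (.var 0) (.app (.abs (SZ n)) θ) := by
    rw [subst0_eq]
    simp only [Lam.subst, shift_subst0]
    simp only [liftSub, cons, rename_closed (SZ_closed n)]
  rw [e3] at s3
  exact (((Relation.ReflTransGen.single s1).tail s2).trans (theta_red h _)).tail s3

/-! ### β-equivalence of the result -/

theorem betaEq_appR (u : Lam) {v v' : Lam} (h : BetaEq v v') : BetaEq (.app u v) (.app u v') := by
  induction h with
  | rel x y h => exact .rel _ _ (.appR u h)
  | refl x => exact .refl _
  | symm x y _ ih => exact .symm _ _ ih
  | trans x y z _ _ ih1 ih2 => exact .trans _ _ _ ih1 ih2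

theorem iterApp_subst (n : ℕ) (f x : Lam) (σ : ℕ → Lam) :
    (iterApp f n x).subst σ = iterApp (f.subst σ) n (x.subst σ) := by
  induction n with
  | zero => rfl
  | succ n ih => simp [iterApp, Lam.subst, ih]

theorem iterApp_closed (n : ℕ) : ClosedUnder 2 (iterApp (.var 0) n (.var 1)) := by
  induction n with
  | zero => simp [iterApp, ClosedUnder]
  | succ n ih => exact ⟨by simp [ClosedUnder], ih⟩

theorem church_closed (n : ℕ) : Closed (church n) := iterApp_closed n

theorem Sc_church (n : ℕ) : BetaEq (.app Sc (church n)) (church (n+1)) := by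
  have h1 : Beta (.app Sc (church n))
      (.abs (.abs (.app (.var 0) (.app (.app (church n) (.var 1)) (.var 0))))) := by
    have := Beta.beta (.abs (.abs (.app (.var 0) (.app (.app (.var 2) (.var 1)) (.var 0)))))
      (church n)
    have e : (Lam.abs (.abs (.app (.var 0) (.app (.app (.var 2) (.var 1)) (.var 0))))).subst0
        (church n) = (.abs (.abs (.app (.var 0) (.app (.app (church n) (.var 1)) (.var 0))))) := by
      rw [subst0_eq]
      simp only [Lam.subst, liftSub, cons, rename_closed (church_closed n)]
      rfl
    rw [e] at this; exact this
  have h2 : Beta (.app (church n) (.var 1)) (.abs (iterApp (.var 0) n (.var 2))) := by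
    have := Beta.beta (.abs (iterApp (.var 0) n (.var 1))) (.var 1)
    rw [subst0_eq] at this
    simp only [Lam.subst, iterApp_subst] at this
    exact this
  have h3 : Beta (.app (.abs (iterApp (.var 0) n (.var 2))) (.var 0))
      (iterApp (.var 0) n (.var 1)) := by
    have := Beta.beta (iterApp (.var 0) n (.var 2)) (.var 0)
    rw [subst0_eq] at this
    simp only [iterApp_subst] at this
    exact this
  refine .trans _ _ _ (.rel _ _ h1) (.trans _ _ _ (.rel _ _ (.abs (.abs (.appR _ (.appL _ h2))))) ?_)
  exact .rel _ _ (.abs (.abs (.appR _ h3)))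

theorem SZ_church (n : ℕ) : BetaEq (SZ n) (church n) := by
  induction n with
  | zero => exact .refl _
  | succ n ih => exact .trans _ _ _ (betaEq_appR Sc ih) (Sc_church n)

theorem T_storage (n : ℕ) : IsStorageFor T (church n) := by
  refine ⟨T_closed, .app (.abs (SZ n)) (.var 1), ?_, ?_⟩
  · refine .trans _ _ _ (.rel _ _ (.beta _ _)) ?_
    rw [subst0_eq, subst_closed (SZ_closed n)]
    exact SZ_church n
  · intro θ h
    refine ⟨fun i => if i = 1 then θ else .var i, rfl, ?_⟩
    simp only [Lam.subst, subst_closed (SZ_closed n)]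
    exact (T_red h).headRed

theorem T_not_proper : ¬ IsProperStorageFor T (church 0) := by
  rintro ⟨-, τ, hc, -, h⟩
  have key : ∀ θ, BetaEq θ (church 0) → τ = .app (.abs (SZ 0)) θ := by
    intro θ hθ
    obtain ⟨σ, -, m, hm⟩ := h θ hθ
    rw [subst_closed hc] at hm
    obtain ⟨k, hk⟩ := (T_red hθ).headRed
    have := headRed_det hm (headNF_var_app _ _) hk (headNF_var_app _ _)
    injection this
  have h1 := key (church 0) (.refl _)
  have h2 := key (.app (.abs (church 0)) (church 0)) (.rel _ _ (.beta _ _))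
  rw [h1] at h2
  injection h2 with _ h3
  cases h3

/-! ### Typing -/

section Typing

variable {E : Set (FOTerm NatSig × FOTerm NatSig)}

theorem zeroT_subst (σ : ℕ → FOTerm NatSig) : zeroT.subst σ = zeroT := by
  simp only [zeroT, FOTerm.subst]
  congr 1; funext i; exact i.elim0

theorem succT_subst (u : FOTerm NatSig) (σ : ℕ → FOTerm NatSig) :
    (succT u).subst σ = succT (u.subst σ) := rfl

theorem zeroT_rename (σ : ℕ → ℕ) : zeroT.rename σ = zeroT := by
  simp only [zeroT, FOTerm.rename]
  congr 1; funext i; exact i.elim0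

theorem NForm_substFO (u : FOTerm NatSig) (σ : ℕ → FOTerm NatSig) :
    (NForm u).substFO σ = NForm (u.subst σ) := by
  simp [NForm, Form.substFO, zeroT_subst, succT_subst, FOTerm.subst, FOTerm.liftSub]

theorem NForm_rename2 (u : FOTerm NatSig) (r : ℕ → ℕ) : (NForm u).rename2 r = NForm u := rfl

theorem ty_Z (Γ : List (Form NatSig)) : AF2 NatSig E Γ Z (NForm zeroT) :=
  .pallI (.absI (.absI (.var rfl)))

theorem fo_subst_var (u : FOTerm NatSig) : u.subst FOTerm.var = u := by
  induction u with
  | var i => rfl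
  | fn f ts ih => simp only [FOTerm.subst, ih]

/-- Elimination of `N[u]` with the predicate variable `0`. -/
theorem N_elim {Γ : List (Form NatSig)} {t : Lam} {u : FOTerm NatSig}
    (h : AF2 NatSig E Γ t (NForm u)) : AF2 NatSig E Γ t
      (.arr (.pvar 0 [zeroT])
    (.arr (.fall (.arr (.pvar 0 [FOTerm.var 0]) (.pvar 0 [succT (FOTerm.var 0)])))
      (.pvar 0 [u]))) := by
  have := AF2.pallE (.pvar 0 [FOTerm.var 0]) h
  simpa [Form.inst2_0, Form.inst2, Form.rename2, Form.substFO, FOTerm.subst] using this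

theorem ty_Sc_app {Γ : List (Form NatSig)} {u : FOTerm NatSig} :
    AF2 NatSig E Γ Sc (.arr (NForm u) (NForm (succT u))) := by
  refine .absI (.pallI (.absI (.absI ?_)))
  rw [List.map_cons, NForm_rename2]
  refine .appE (A := .pvar 0 [u]) ?_ ?_
  · have := AF2.fallE (E := E) u (AF2.var (Γ := (Form.fall (.arr (.pvar 0 [FOTerm.var 0]) (.pvar 0 [succT (FOTerm.var 0)]))) ::
      .pvar 0 [zeroT] :: NForm u :: Γ.map (Form.rename2 (· + 1))) (i := 0) rfl)
    exact this
  · exact .appE (.appE (N_elim (.var rfl)) (.var rfl)) (.var rfl)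

theorem ty_dl {Γ : List (Form NatSig)} :
    AF2 NatSig E Γ dl (.neg (.neg (NForm zeroT))) :=
  .absI (.appE (.var rfl) (ty_Z _))

theorem ty_G {Γ : List (Form NatSig)} {u : FOTerm NatSig} :
    AF2 NatSig E Γ G (.arr (.neg (.neg (NForm u))) (.neg (.neg (NForm (succT u))))) :=
  .absI (.absI (.appE (.var rfl) (.absI (.appE (.var rfl) (.appE ty_Sc_app (.var rfl))))))

theorem Ng_elim {Γ : List (Form NatSig)} {t : Lam} {u : FOTerm NatSig}
    (h : AF2 NatSig E Γ t (NForm u).godel) : AF2 NatSig E Γ t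
      (.arr (.neg (.neg (NForm zeroT)))
    (.arr (.fall (.arr (.neg (.neg (NForm (.var 0)))) (.neg (.neg (NForm (succT (.var 0)))))))
      (.neg (.neg (NForm u))))) := by
  have := AF2.pallE (.neg (NForm (.var 0))) h
  simpa [Form.inst2_0, Form.inst2, Form.rename2, Form.substFO, FOTerm.subst, Form.neg, Form.godel,
    NForm_rename2, NForm_substFO] using this

theorem T_typed : AF2 NatSig E [] T storType := by
  refine .fallI (.absI (.absI ?_))
  refine .appE (.appE (.appE (Ng_elim (.var rfl)) ty_dl) (.fallI ty_G)) ?_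
  exact .absI (.appE (.var rfl) (.appE (.absI (.var rfl)) (.var rfl)))

end Typing

end SO

open Lam in
/-- There is a non proper storage operator for Church integers of type
`∀x{N^g[x] → ¬¬N[x]}` in AF2. -/
theorem stmt13 :
    ∃ T : Lam,
      (∀ E : Set (FOTerm NatSig × FOTerm NatSig), AF2 NatSig E [] T storType) ∧
      (∀ n : ℕ, IsStorageFor T (church n)) ∧
      ¬ (∀ n : ℕ, IsProperStorageFor T (church n)) := by
  exact ⟨SO.T, fun _ => SO.T_typed, SO.T_storage, fun h => SO.T_not_proper (h 0)⟩
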